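/- Let λ > 0, let x_t ∈ ℝ^d, and let x_1, …, x_m ∈ ℝ^d with m ≥ 1 (the negative examples received before round t, with y_t = +1). Set L_t(w) = (λ/2)‖w‖₂² + (1/(2m)) Σ_{i=1}^m (1 − (x_t − x_i)·w)², c⁻ = (1/m) Σ_{i=1}^m x_i, and S⁻ = (1/m) Σ_{i=1}^m (x_i x_iᵀ − c⁻ (c⁻)ᵀ). Then for every w ∈ ℝ^d, the gradient of L_t at w equals ∇L_t(w) = λw − x_t + c⁻ + (x_t − c⁻)(x_t − c⁻)ᵀ w + S⁻ w. -/

import Mathlib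

open Finset
open scoped RealInnerProductSpace

/-- Gradient identity (Equation (3) of the paper): for the per-round loss
`L v = λ/2 ‖v‖² + (1/(2m)) ∑_i (1 - (x_t - x_i)·v)²` built from the negative examples
`x 1, …, x m` (round `t` with `y t = +1`), with class mean `c⁻ = (1/m) ∑ x_i` and class
covariance `S⁻ = (1/m) ∑ (x_i x_iᵀ - c⁻ c⁻ᵀ)`, the gradient at any `w` equals
`λ w - x_t + c⁻ + (x_t - c⁻)(x_t - c⁻)ᵀ w + S⁻ w` (outer products acting as matrices). -/
theorem auc_gradient_mean_covariance_identity (d m : ℕ) (hm : 0 < m)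
    (lam : ℝ) (hlam : 0 < lam)
    (xt : EuclideanSpace ℝ (Fin d)) (x : Fin m → EuclideanSpace ℝ (Fin d))
    (L : EuclideanSpace ℝ (Fin d) → ℝ)
    (hL : ∀ v, L v =
      lam / 2 * ‖v‖ ^ 2 +
        (1 / (2 * (m : ℝ))) * ∑ i : Fin m, (1 - ⟪xt - x i, v⟫) ^ 2)
    (c : EuclideanSpace ℝ (Fin d)) (hc : c = (m : ℝ)⁻¹ • ∑ i : Fin m, x i)
    (S : Matrix (Fin d) (Fin d) ℝ)
    (hS : S = (m : ℝ)⁻¹ •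
      ∑ i : Fin m,
        (Matrix.vecMulVec (fun k => x i k) (fun k => x i k)
          - Matrix.vecMulVec (fun k => c k) (fun k => c k)))
    (w : EuclideanSpace ℝ (Fin d)) :
    ∀ k : Fin d,
      gradient L w k =
        lam * w k - xt k + c k
          + ((Matrix.vecMulVec (fun j => xt j - c j) (fun j => xt j - c j)).mulVec
              (fun j => w j)) k
          + (S.mulVec (fun j => w j)) k := by
  have hm0 : (m : ℝ) ≠ 0 := by positivity
  have hgrad : HasGradientAt L
      (lam • w - (m : ℝ)⁻¹ • ∑ i : Fin m, (1 - ⟪xt - x i, w⟫) • (xt - x i)) w := by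
    rw [hasGradientAt_iff_hasFDerivAt]
    have hLf : L = fun v => lam / 2 * ‖v‖ ^ 2 +
        (1 / (2 * (m : ℝ))) * ∑ i : Fin m, (1 - ⟪xt - x i, v⟫) ^ 2 := funext hL
    rw [hLf]
    have h1 : HasFDerivAt (fun v : EuclideanSpace ℝ (Fin d) => ‖v‖ ^ 2)
        (2 • (innerSL ℝ w)) w := (hasStrictFDerivAt_norm_sq w).hasFDerivAt
    have h2 : ∀ i ∈ (Finset.univ : Finset (Fin m)),
        HasFDerivAt (fun v : EuclideanSpace ℝ (Fin d) => (1 - ⟪xt - x i, v⟫) ^ 2) _ w :=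
      fun i _ => (((innerSL ℝ (xt - x i)).hasFDerivAt (x := w)).const_sub 1).pow 2
    have h3 := (h1.const_mul (lam / 2)).add
      ((HasFDerivAt.fun_sum h2).const_mul (1 / (2 * (m : ℝ))))
    refine h3.congr_fderiv ?_
    ext v
    simp [inner_sub_left, inner_smul_left, sum_inner, Finset.mul_sum]
    rw [sub_eq_add_neg, ← Finset.sum_neg_distrib]
    congr 1
    · ring
    · refine Finset.sum_congr rfl fun i _ => ?_
      field_simp
      ring
  intro k
  rw [hgrad.gradient]
  have hdot : ∀ (a : EuclideanSpace ℝ (Fin d)),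
      ∑ j, a j * w j = ⟪a, w⟫ := by
    intro a
    simp [PiLp.inner_apply, mul_comm]
  have hout : ∀ (a : EuclideanSpace ℝ (Fin d)),
      ((Matrix.vecMulVec (fun j => a j) (fun j => a j)).mulVec (fun j => w j)) k
        = a k * ⟪a, w⟫ := by
    intro a
    rw [← hdot, Finset.mul_sum]
    simp [Matrix.mulVec, dotProduct, Matrix.vecMulVec_apply, mul_assoc]
  have hSw : (S.mulVec (fun j => w j)) k
      = (m : ℝ)⁻¹ * ∑ i, (x i k * ⟪x i, w⟫ - c k * ⟪c, w⟫) := by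
    rw [hS, Matrix.smul_mulVec, Matrix.sum_mulVec]
    simp only [Matrix.sub_mulVec, Pi.smul_apply, Finset.sum_apply, Pi.sub_apply, hout,
      smul_eq_mul]
  have hx := hout (xt - c)
  simp only [PiLp.sub_apply] at hx
  rw [hx, hSw]
  have hck : ∑ i, x i k = m * c k := by
    rw [hc]; simp [hm0]
  have hcw : ∑ i, ⟪x i, w⟫ = m * ⟪c, w⟫ := by
    rw [hc, inner_smul_left, sum_inner]; simp [hm0]
  have hsum : ∑ i : Fin m, (1 - ⟪xt - x i, w⟫) * (xt k - x i k)
      = m * xt k - m * c k - m * (⟪xt, w⟫ * xt k) + ⟪xt, w⟫ * (m * c k)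
        + xt k * (m * ⟪c, w⟫) - ∑ i, x i k * ⟪x i, w⟫ := by
    rw [← hck, ← hcw]
    have : (m : ℝ) * xt k - m * (⟪xt, w⟫ * xt k)
      = ∑ i : Fin m, (xt k - ⟪xt, w⟫ * xt k) := by simp
    rw [show ∀ a b e f g h : ℝ, a - b - e + f + g - h = (a - e) - b + f + g - h by
      intros; ring, this, Finset.mul_sum, Finset.mul_sum, ← Finset.sum_sub_distrib,
      ← Finset.sum_add_distrib, ← Finset.sum_add_distrib, ← Finset.sum_sub_distrib]
    refine Finset.sum_congr rfl fun i _ => ?_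
    rw [inner_sub_left]; ring
  have hgk : (lam • w - (m : ℝ)⁻¹ • ∑ i : Fin m, (1 - ⟪xt - x i, w⟫) • (xt - x i)) k
      = lam * w k - (m : ℝ)⁻¹ * ∑ i : Fin m, (1 - ⟪xt - x i, w⟫) * (xt k - x i k) := by
    simp
  rw [hgk, hsum, Finset.sum_sub_distrib, inner_sub_left]
  simp only [Finset.sum_const, Finset.card_univ, Fintype.card_fin, nsmul_eq_mul]
  field_simp
  ring
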